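/- The limit distribution function F of the Calkin–Wilf tree takes the values F(1) = 1/2, F(√2) = 3/5, and F((1+√5)/2) = 2/3. -/

import Mathlib

open Filter

/-- The generations of the Calkin–Wilf tree: `CW 0 = [1/1]` is the first
generation, and each generation is obtained from the previous one by replacing
each entry `x` by `x/(x+1)` and `x+1`, in this order.  Thus the `n`-th
generation of the paper is `CW (n-1)`. -/
def CW : ℕ → List ℚ
  | 0 => [1]
  | n + 1 => (CW n).flatMap (fun x => [x / (x + 1), x + 1])

open scoped Classical in
/-- `Fcw n` is the distribution function of the `(n+1)`-st generation of the
Calkin–Wilf tree: `Fcw (n-1) x = F_n(x) = 2^(1-n) · #{j : x_j^(n) ≤ x}`. -/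
noncomputable def Fcw (n : ℕ) (x : ℝ) : ℝ :=
  ((CW n).countP (fun q => decide ((q : ℝ) ≤ x))) / 2 ^ n

theorem cw_pos (n : ℕ) : ∀ q ∈ CW n, 0 < q := by
  induction n with
  | zero => simp [CW]
  | succ n ih =>
    intro q hq
    simp only [CW, List.mem_flatMap, List.mem_cons, List.not_mem_nil, or_false] at hq
    obtain ⟨a, ha, h⟩ := hq
    have := ih a ha
    rcases h with rfl | rfl <;> positivity

theorem cw_length (n : ℕ) : (CW n).length = 2 ^ n := by
  induction n with
  | zero => simp [CW]
  | succ n ih => simp [CW, List.length_flatMap, ih, pow_succ]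

open scoped Classical in
theorem count_ge (x : ℝ) (hx : 1 ≤ x) (l : List ℚ) (hl : ∀ q ∈ l, 0 < q) :
    (l.flatMap (fun x : ℚ => [x / (x + 1), x + 1])).countP (fun q : ℚ => decide ((q : ℝ) ≤ x))
      = l.length + l.countP (fun q : ℚ => decide ((q : ℝ) ≤ x - 1)) := by
  induction l with
  | nil => simp
  | cons a l ih =>
    have ha : (0 : ℝ) < a := by exact_mod_cast hl a (by simp)
    have h1 : ((a / (a + 1) : ℚ) : ℝ) ≤ x := by
      push_cast
      exact le_trans ((div_le_one (by linarith)).2 (by linarith)) hx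
    have h2 : ((a + 1 : ℚ) : ℝ) ≤ x ↔ (a : ℝ) ≤ x - 1 := by
      push_cast
      constructor <;> intro h <;> linarith
    rw [List.flatMap_cons, List.countP_append, ih (fun q hq => hl q (by simp [hq]))]
    simp only [List.countP_cons, List.countP_nil, List.length_cons, h1, h2]
    simp
    omega

open scoped Classical in
theorem count_lt (x : ℝ) (hx : x < 1) (l : List ℚ) (hl : ∀ q ∈ l, 0 < q) :
    (l.flatMap (fun x : ℚ => [x / (x + 1), x + 1])).countP (fun q : ℚ => decide ((q : ℝ) ≤ x))
      = l.countP (fun q : ℚ => decide ((q : ℝ) ≤ x / (1 - x))) := by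
  induction l with
  | nil => simp
  | cons a l ih =>
    have ha : (0 : ℝ) < a := by exact_mod_cast hl a (by simp)
    have h1 : ((a / (a + 1) : ℚ) : ℝ) ≤ x ↔ (a : ℝ) ≤ x / (1 - x) := by
      push_cast
      rw [div_le_iff₀ (by linarith), le_div_iff₀ (by linarith)]
      constructor <;> intro h <;> linarith
    have h2 : ¬ ((a + 1 : ℚ) : ℝ) ≤ x := by
      push_cast
      linarith
    rw [List.flatMap_cons, List.countP_append, ih (fun q hq => hl q (by simp [hq]))]
    simp only [List.countP_cons, List.countP_nil, h1, h2]
    simp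
    omega

open scoped Classical in
theorem fcw_eq (n : ℕ) (x : ℝ) :
    Fcw n x = ((CW n).countP (fun q : ℚ => decide ((q : ℝ) ≤ x)) : ℕ) / 2 ^ n := by
  have key : ∀ l : List ℚ, (l >>= fun a => (pure (a : ℝ) : List ℝ)).countP
      (fun q => decide (q ≤ x)) = l.countP (fun q : ℚ => decide ((q : ℝ) ≤ x)) := by
    intro l
    have h : (l >>= fun a => (pure (a : ℝ) : List ℝ)) = l.map (fun a : ℚ => (a : ℝ)) := by
      induction l with
      | nil => rfl
      | cons a l ih => simpa using ih
    rw [h, List.countP_map]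
    rfl
  unfold Fcw
  rw [key]

theorem fcw_ge (n : ℕ) (x : ℝ) (hx : 1 ≤ x) : Fcw (n + 1) x = 1 / 2 + Fcw n (x - 1) / 2 := by
  rw [fcw_eq, fcw_eq, CW, count_ge x hx _ (cw_pos n), cw_length]
  push_cast
  field_simp
  ring

theorem fcw_lt (n : ℕ) (x : ℝ) (hx : x < 1) : Fcw (n + 1) x = Fcw n (x / (1 - x)) / 2 := by
  rw [fcw_eq, fcw_eq, CW, count_lt x hx _ (cw_pos n)]
  field_simp
  ring

/-- The limit distribution function `F` of the Calkin–Wilf tree takes the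
values `F(1) = 1/2`, `F(√2) = 3/5`, and `F((1+√5)/2) = 2/3`. -/
theorem calkin_wilf_limit_distribution_special_values (F : ℝ → ℝ)
    (hF : ∀ x : ℝ, 0 ≤ x → Tendsto (fun n => Fcw n x) atTop (nhds (F x))) :
    F 1 = 1 / 2 ∧ F (Real.sqrt 2) = 3 / 5 ∧ F ((1 + Real.sqrt 5) / 2) = 2 / 3 := by
  have G : ∀ x y : ℝ, 1 ≤ x → x - 1 = y → F x = 1 / 2 + F y / 2 := by
    rintro x y hx rfl
    have h1 := (tendsto_add_atTop_iff_nat 1).2 (hF x (by linarith))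
    simp only [fcw_ge _ x hx] at h1
    exact tendsto_nhds_unique h1 (((hF (x - 1) (by linarith)).div_const 2).const_add _)
  have L : ∀ x y : ℝ, 0 ≤ x → x < 1 → x / (1 - x) = y → F x = F y / 2 := by
    rintro x y h0 hx rfl
    have h1 := (tendsto_add_atTop_iff_nat 1).2 (hF x h0)
    simp only [fcw_lt _ x hx] at h1
    exact tendsto_nhds_unique h1
      ((hF (x / (1 - x)) (div_nonneg h0 (by linarith))).div_const 2)
  refine ⟨?_, ?_, ?_⟩
  · have h0 := L 0 0 le_rfl one_pos (by simp)
    have h1 := G 1 0 le_rfl (by simp)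
    linarith
  · have hs : Real.sqrt 2 * Real.sqrt 2 = 2 := Real.mul_self_sqrt (by norm_num)
    have hp := Real.sqrt_nonneg 2
    set s := Real.sqrt 2
    have b1 : 1 < s := by nlinarith
    have b2 : s < 2 := by nlinarith
    have h1 := G s (s - 1) b1.le rfl
    have h2 := L (s - 1) (s / 2) (by linarith) (by linarith) (by
      rw [div_eq_iff (by linarith)]; linarith)
    have h3 := L (s / 2) (s + 1) (by linarith) (by linarith) (by
      rw [div_eq_iff (by linarith)]; linarith)
    have h4 := G (s + 1) s (by linarith) (by ring)
    linarith
  · have hs : Real.sqrt 5 * Real.sqrt 5 = 5 := Real.mul_self_sqrt (by norm_num)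
    have hp := Real.sqrt_nonneg 5
    set s := Real.sqrt 5
    have b1 : 1 < s := by nlinarith
    have b2 : s < 3 := by nlinarith
    have h1 := G ((1 + s) / 2) ((1 + s) / 2 - 1) (by linarith) rfl
    have h2 := L ((1 + s) / 2 - 1) ((1 + s) / 2) (by linarith) (by linarith) (by
      rw [div_eq_iff (by linarith)]; linarith)
    linarith
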